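/- Let k = 3, so N = 9. There exist a constant c > 0 and R₀ ≥ 2 such that for every R ≥ R₀, ∫_{B_R} |E_31(x)|^{12} dx ≥ c · log R, where B_R ⊂ ℝ⁹ is the closed ball of radius R centered at the origin. -/

import Mathlib

open MeasureTheory Real Set
open scoped ENNReal

noncomputable section

/-- Index set for multi-indices `β = (β₁, β₂) ∈ ℕ²` with `1 ≤ β₁ + β₂ ≤ k`;
its cardinality is `N = (k+1)(k+2)/2 − 1`. -/
def Idx (k : ℕ) : Type :=
  {β : Fin (k + 1) × Fin (k + 1) // 1 ≤ (β.1 : ℕ) + (β.2 : ℕ) ∧ (β.1 : ℕ) + (β.2 : ℕ) ≤ k}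

instance (k : ℕ) : Fintype (Idx k) := by unfold Idx; infer_instance

/-- The phase polynomial `P(ξ; x) = ∑_{1 ≤ |β| ≤ k} x_β ξ₁^{β₁} ξ₂^{β₂}`. -/
def Pphase (k : ℕ) (x : Idx k → ℝ) (ξ : Fin 2 → ℝ) : ℝ :=
  ∑ β : Idx k, x β * ξ 0 ^ (β.1.1 : ℕ) * ξ 1 ^ (β.1.2 : ℕ)

/-- `E_k1(x) = ∫_{[0,1]²} e(P(ξ; x)) dξ` with `e(t) = exp(2πit)`. -/
def Eone (k : ℕ) (x : Idx k → ℝ) : ℂ :=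
  ∫ ξ in Icc (0 : Fin 2 → ℝ) 1, Complex.exp (2 * Real.pi * Complex.I * (Pphase k x ξ))

/-- First derivative test bound for the tail of an Airy-type integral. -/
lemma integral_cos_cubic_tail_ge {q θ b : ℝ} (hq : |q| ≤ 1 / 1000) (hb : 3 / 5 ≤ b) :
    -(3 / 10) ≤ ∫ t in (3 / 5)..b, cos (2 * π * (t ^ 3 + q * t + θ)) := by
  obtain ⟨hq₁, hq₂⟩ := abs_le.1 hq
  set φ : ℝ → ℝ := fun t => 2 * π * (t ^ 3 + q * t + θ) with hφ
  set ψ : ℝ → ℝ := fun t => 2 * π * (3 * t ^ 2 + q) with hψ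
  have hψpos : ∀ t, 3 / 5 ≤ t → 0 < ψ t := fun t ht => by
    have : 0 < 3 * t ^ 2 + q := by nlinarith
    have := pi_pos
    positivity
  have hφ' : ∀ t, HasDerivAt φ (ψ t) t := fun t => by
    have h := ((((hasDerivAt_id t).pow 3).add ((hasDerivAt_id t).const_mul q)).add_const
      θ).const_mul (2 * π)
    exact h.congr_deriv (by simp [hψ])
  have hψ' : ∀ t, HasDerivAt ψ (12 * π * t) t := fun t => by
    have h := ((((hasDerivAt_id t).pow 2).const_mul 3).add_const q).const_mul (2 * π)
    exact h.congr_deriv (by simp; ring)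
  have hG : ∀ t, 3 / 5 ≤ t → HasDerivAt (fun t => (sin (φ t) + 1) / ψ t)
      ((cos (φ t) * ψ t * ψ t - (sin (φ t) + 1) * (12 * π * t)) / ψ t ^ 2) t := fun t ht =>
    ((hφ' t).sin.add_const 1).div (hψ' t) (hψpos t ht).ne'
  have key := intervalIntegral.sub_le_integral_of_hasDeriv_right_of_le hb
    (g := fun t => (sin (φ t) + 1) / ψ t) (φ := fun t => cos (φ t))
    (fun t ht => (hG t ht.1).continuousAt.continuousWithinAt)
    (fun t ht => (hG t ht.1.le).hasDerivWithinAt)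
    (Continuous.integrableOn_Icc (by fun_prop))
    (fun t ht => by
      have hp := hψpos t ht.1.le
      rw [div_le_iff₀ (by positivity)]
      have h1 : 0 ≤ (sin (φ t) + 1) * (12 * π * t) :=
        mul_nonneg (by linarith [neg_one_le_sin (φ t)])
          (mul_nonneg (by positivity) (by linarith [ht.1]))
      nlinarith)
  refine le_trans ?_ key
  have hb0 : 0 ≤ (sin (φ b) + 1) / ψ b :=
    div_nonneg (by linarith [neg_one_le_sin (φ b)]) (hψpos b hb).le
  have ha0 : (sin (φ (3 / 5)) + 1) / ψ (3 / 5) ≤ 3 / 10 := by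
    rw [div_le_iff₀ (hψpos _ le_rfl)]
    have h1 := sin_le_one (φ (3 / 5))
    have h2 := pi_gt_d2
    simp only [hψ]
    nlinarith
  linarith

lemma integral_cos_cubic_center_ge {q θ : ℝ} (hq : |q| ≤ 1 / 1000) (hθ : |θ| ≤ 1 / 1000) :
    1 ≤ ∫ t in (-(3 / 5))..(3 / 5), cos (2 * π * (t ^ 3 + q * t + θ)) := by
  have hpt : ∀ t ∈ Icc (-(3 / 5) : ℝ) (3 / 5),
      1 - 20 * (t ^ 6 + 7 / 10000) ≤ cos (2 * π * (t ^ 3 + q * t + θ)) := fun t ht => by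
    refine le_trans ?_ one_sub_sq_div_two_le_cos
    have ht' : |t| ≤ 3 / 5 := abs_le.2 ht
    have h1 : |q * t + θ| ≤ 16 / 10000 := by
      refine (abs_add_le _ _).trans ?_
      rw [abs_mul]
      nlinarith [abs_nonneg q, abs_nonneg t]
    have h2 : |t ^ 3| ≤ 216 / 1000 := by
      rw [abs_pow]
      calc |t| ^ 3 ≤ (3 / 5) ^ 3 := by gcongr
        _ = _ := by norm_num
    have h3 : (t ^ 3 + q * t + θ) ^ 2 ≤ t ^ 6 + 7 / 10000 := by
      have h4 : |t ^ 3 * (q * t + θ)| ≤ 216 / 1000 * (16 / 10000) := by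
        rw [abs_mul]
        gcongr
      have h5 := (abs_le.1 h4).2
      have h6 : (q * t + θ) ^ 2 ≤ (16 / 10000) ^ 2 := sq_le_sq' (abs_le.1 h1).1 (abs_le.1 h1).2
      nlinarith
    have h7 : π ^ 2 ≤ 10 := by nlinarith [pi_lt_d2, pi_pos]
    have h8 : π ^ 2 * (t ^ 3 + q * t + θ) ^ 2 ≤ 10 * (t ^ 6 + 7 / 10000) := by gcongr
    nlinarith
  have hmono := intervalIntegral.integral_mono_on (μ := volume)
    (by norm_num : (-(3 / 5) : ℝ) ≤ 3 / 5)
    (Continuous.intervalIntegrable (by fun_prop) _ _)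
    (Continuous.intervalIntegrable (by fun_prop) _ _) hpt
  refine le_trans ?_ hmono
  have hval : ∫ t in (-(3 / 5) : ℝ)..(3 / 5), (1 - 20 * (t ^ 6 + 7 / 10000)) =
      6 / 5 - 20 * (2 * (3 / 5) ^ 7 / 7 + 6 / 5 * (7 / 10000)) := by
    rw [intervalIntegral.integral_sub (by simp) (Continuous.intervalIntegrable (by fun_prop) _ _),
      intervalIntegral.integral_const_mul, intervalIntegral.integral_add
        (Continuous.intervalIntegrable (by fun_prop) _ _) (by simp), integral_pow]
    simp
    norm_num
  rw [hval]
  norm_num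

/-- Uniform lower bound for truncated Airy-type integrals. -/
lemma integral_cos_cubic_ge {q θ A B : ℝ} (hq : |q| ≤ 1 / 1000) (hθ : |θ| ≤ 1 / 1000)
    (hA : 3 / 5 ≤ A) (hB : 3 / 5 ≤ B) :
    1 / 4 ≤ ∫ t in (-A)..B, cos (2 * π * (t ^ 3 + q * t + θ)) := by
  have hint : ∀ a b : ℝ,
      IntervalIntegrable (fun t => cos (2 * π * (t ^ 3 + q * t + θ))) volume a b :=
    fun a b => Continuous.intervalIntegrable (by fun_prop) _ _
  rw [← intervalIntegral.integral_add_adjacent_intervals (hint (-A) (-(3 / 5))) (hint _ B),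
    ← intervalIntegral.integral_add_adjacent_intervals (hint (-(3 / 5)) (3 / 5)) (hint _ B)]
  have hleft : ∫ t in (-A)..(-(3 / 5)), cos (2 * π * (t ^ 3 + q * t + θ)) =
      ∫ t in (3 / 5)..A, cos (2 * π * (t ^ 3 + q * t + -θ)) := by
    rw [← intervalIntegral.integral_comp_neg]
    refine intervalIntegral.integral_congr fun t _ => ?_
    rw [← cos_neg]
    congr 1
    ring
  rw [hleft]
  linarith [integral_cos_cubic_tail_ge (θ := θ) hq hB, integral_cos_cubic_tail_ge (θ := -θ) hq hA,
    integral_cos_cubic_center_ge hq hθ]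

lemma integral_cos_cubic_rescaled_ge {t m q θ : ℝ} (ht : 4 ≤ t) (hm : m ∈ Icc (1 / 4 : ℝ) (3 / 4))
    (hq : |q| ≤ t / 1000) (hθ : |θ| ≤ 1 / 1000) :
    1 / (4 * t) ≤ ∫ η in (0 : ℝ)..1, cos (2 * π * (t ^ 3 * (η - m) ^ 3 + q * (η - m) + θ)) := by
  have ht0 : 0 < t := by linarith
  have hsub := intervalIntegral.integral_comp_mul_sub (a := 0) (b := 1)
    (fun η => cos (2 * π * (η ^ 3 + q / t * η + θ))) ht0.ne' (t * m)
  have heq : ∀ η : ℝ, (t * η - t * m) ^ 3 + q / t * (t * η - t * m) + θ =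
      t ^ 3 * (η - m) ^ 3 + q * (η - m) + θ := fun η => by
    field_simp
  simp only [heq] at hsub
  rw [hsub]
  have h := integral_cos_cubic_ge (q := q / t) (A := t * m) (B := t * 1 - t * m)
    (by rw [abs_div, abs_of_pos ht0, div_le_iff₀ ht0]; linarith) hθ
    (by nlinarith [hm.1]) (by nlinarith [hm.2])
  rw [smul_eq_mul, mul_zero, zero_sub]
  calc 1 / (4 * t) = t⁻¹ * (1 / 4) := by field_simp
    _ ≤ _ := by gcongr

/-- A phase that is a cubic concentrated on a strip of width `1 / t` gives an oscillatory integral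
of size at least a constant times `1 / t`. -/
lemma norm_integral_exp_ge_of_strip {P : (Fin 2 → ℝ) → ℝ} {t k₀ : ℝ} {m q r : ℝ → ℝ}
    (ht : 4 ≤ t) (hmc : Continuous m) (hqc : Continuous q) (hrc : Continuous r)
    (hm : ∀ y ∈ Icc (0 : ℝ) 1, m y ∈ Icc (1 / 4 : ℝ) (3 / 4))
    (hq : ∀ y ∈ Icc (0 : ℝ) 1, |q y| ≤ t / 1000)
    (hr : ∀ y ∈ Icc (0 : ℝ) 1, |r y| ≤ 1 / 1000)
    (hP : ∀ ξ, P ξ = t ^ 3 * (ξ 0 - m (ξ 1)) ^ 3 + q (ξ 1) * (ξ 0 - m (ξ 1)) + r (ξ 1) + k₀) :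
    1 / (4 * t) ≤
      ‖∫ ξ in Icc (0 : Fin 2 → ℝ) 1, Complex.exp (2 * π * Complex.I * (P ξ))‖ := by
  set f : ℝ × ℝ → ℝ := fun p =>
    cos (2 * π * (t ^ 3 * (p.1 - m p.2) ^ 3 + q p.2 * (p.1 - m p.2) + r p.2)) with hf
  have hfc : Continuous f := by fun_prop
  have hPc : Continuous P := by
    rw [funext hP]
    fun_prop
  set u : ℂ := Complex.exp (((-(2 * π * k₀) : ℝ) : ℂ) * Complex.I) with hu
  have hre : (u * ∫ ξ in Icc (0 : Fin 2 → ℝ) 1, Complex.exp (2 * π * Complex.I * (P ξ))).re =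
      ∫ ξ in Icc (0 : Fin 2 → ℝ) 1, f (ξ 0, ξ 1) := by
    rw [← integral_const_mul]
    have hint : IntegrableOn (fun ξ => u * Complex.exp (2 * π * Complex.I * (P ξ)))
        (Icc (0 : Fin 2 → ℝ) 1) :=
      (Continuous.continuousOn (by fun_prop)).integrableOn_compact isCompact_Icc
    have h := integral_re (𝕜 := ℂ) hint
    simp only [RCLike.re_to_complex] at h
    rw [← h]
    refine setIntegral_congr_fun measurableSet_Icc fun ξ _ => ?_
    have : u * Complex.exp (2 * π * Complex.I * (P ξ)) =
        Complex.exp (((2 * π * (P ξ - k₀) : ℝ) : ℂ) * Complex.I) := by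
      rw [hu, ← Complex.exp_add]
      congr 1
      push_cast
      ring
    change (u * Complex.exp (2 * π * Complex.I * (P ξ))).re = _
    rw [this, Complex.exp_ofReal_mul_I_re, hP, add_sub_cancel_right]
  have hfub : ∫ ξ in Icc (0 : Fin 2 → ℝ) 1, f (ξ 0, ξ 1) =
      ∫ y in (0 : ℝ)..1, ∫ η in (0 : ℝ)..1, f (η, y) := by
    have hpre : Icc (0 : Fin 2 → ℝ) 1 =
        MeasurableEquiv.finTwoArrow ⁻¹' (Icc (0 : ℝ) 1 ×ˢ Icc (0 : ℝ) 1) := by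
      ext ξ
      simp [Pi.le_def, Fin.forall_fin_two, MeasurableEquiv.finTwoArrow]
    have h1 := (volume_preserving_finTwoArrow ℝ).setIntegral_preimage_emb
      (MeasurableEquiv.measurableEmbedding _) f (Icc (0 : ℝ) 1 ×ˢ Icc (0 : ℝ) 1)
    rw [← hpre] at h1
    have h3 := setIntegral_prod_swap (Icc (0 : ℝ) 1) (Icc (0 : ℝ) 1) f (μ := volume) (ν := volume)
    refine h1.trans ?_
    rw [Measure.volume_eq_prod, ← h3, setIntegral_prod]
    · simp only [intervalIntegral.integral_of_le zero_le_one, integral_Icc_eq_integral_Ioc,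
        Prod.swap]
    · exact (Continuous.continuousOn (by fun_prop)).integrableOn_compact
        (isCompact_Icc.prod isCompact_Icc)
  have hlow : 1 / (4 * t) ≤ ∫ y in (0 : ℝ)..1, ∫ η in (0 : ℝ)..1, f (η, y) := by
    have hpt : ∀ y ∈ Icc (0 : ℝ) 1, 1 / (4 * t) ≤ ∫ η in (0 : ℝ)..1, f (η, y) := fun y hy => by
      simp only [hf]
      exact integral_cos_cubic_rescaled_ge ht (hm y hy) (hq y hy) (hr y hy)
    have hcont : Continuous fun y => ∫ η in (0 : ℝ)..1, f (η, y) :=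
      intervalIntegral.continuous_parametric_intervalIntegral_of_continuous' (by fun_prop) _ _
    have hmono := intervalIntegral.integral_mono_on (μ := volume) (zero_le_one (α := ℝ))
      (f := fun _ => 1 / (4 * t)) (by simp) (hcont.intervalIntegrable _ _) hpt
    simpa using hmono
  calc 1 / (4 * t) ≤ (u * ∫ ξ in Icc (0 : Fin 2 → ℝ) 1,
        Complex.exp (2 * π * Complex.I * (P ξ))).re := by rw [hre, hfub]; exact hlow
    _ ≤ _ := (Complex.re_le_norm _).trans (by
      rw [norm_mul, hu, Complex.norm_exp_ofReal_mul_I, one_mul])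

/-- The exponents in two variables of degree between `1` and `3`, grouped as `(3,0)`;
`(2,1), (2,0)`; `(1,0), (1,1), (1,2)`; `(0,1), (0,2), (0,3)`. -/
def cubicIdx : Fin 1 ⊕ Fin 2 ⊕ Fin 3 ⊕ Fin 3 → Idx 3 :=
  Sum.elim (fun _ => ⟨(3, 0), by decide⟩)
    (Sum.elim ![⟨(2, 1), by decide⟩, ⟨(2, 0), by decide⟩]
      (Sum.elim ![⟨(1, 0), by decide⟩, ⟨(1, 1), by decide⟩, ⟨(1, 2), by decide⟩]
        ![⟨(0, 1), by decide⟩, ⟨(0, 2), by decide⟩, ⟨(0, 3), by decide⟩]))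

instance (k : ℕ) : DecidableEq (Idx k) := by unfold Idx; infer_instance

lemma cubicIdx_bijective : Function.Bijective cubicIdx := by
  unfold Function.Bijective Function.Injective Function.Surjective
  decide

/-- `cubicIdx` as an equivalence. -/
def cubicIdxEquiv : Fin 1 ⊕ Fin 2 ⊕ Fin 3 ⊕ Fin 3 ≃ Idx 3 :=
  Equiv.ofBijective cubicIdx cubicIdx_bijective

/-- The coefficient vector of a cubic polynomial assembled from its groups of coefficients. -/
def cubicCoeff (p : ℝ × (Fin 2 → ℝ) × (Fin 3 → ℝ) × (Fin 3 → ℝ)) : Idx 3 → ℝ := fun β =>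
  Sum.elim (fun _ => p.1) (Sum.elim p.2.1 (Sum.elim p.2.2.1 p.2.2.2)) (cubicIdxEquiv.symm β)

lemma cubicCoeff_cubicIdxEquiv (p : ℝ × (Fin 2 → ℝ) × (Fin 3 → ℝ) × (Fin 3 → ℝ))
    (j : Fin 1 ⊕ Fin 2 ⊕ Fin 3 ⊕ Fin 3) :
    cubicCoeff p (cubicIdxEquiv j) =
      Sum.elim (fun _ => p.1) (Sum.elim p.2.1 (Sum.elim p.2.2.1 p.2.2.2)) j := by
  simp [cubicCoeff]

lemma Pphase_cubicCoeff (a : ℝ) (z : Fin 2 → ℝ) (y w : Fin 3 → ℝ) (ξ : Fin 2 → ℝ) :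
    Pphase 3 (cubicCoeff (a, z, y, w)) ξ =
      a * ξ 0 ^ 3 + (z 1 + z 0 * ξ 1) * ξ 0 ^ 2 + (y 0 + y 1 * ξ 1 + y 2 * ξ 1 ^ 2) * ξ 0 +
        (w 0 * ξ 1 + w 1 * ξ 1 ^ 2 + w 2 * ξ 1 ^ 3) := by
  rw [Pphase, ← cubicIdxEquiv.sum_comp]
  simp only [cubicCoeff_cubicIdxEquiv, Fintype.sum_sum_type, Fin.sum_univ_two, Fin.sum_univ_three,
    Finset.univ_unique, Finset.sum_singleton, Sum.elim_inl, Sum.elim_inr]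
  change a * ξ 0 ^ 3 * ξ 1 ^ 0 + (z 0 * ξ 0 ^ 2 * ξ 1 ^ 1 + z 1 * ξ 0 ^ 2 * ξ 1 ^ 0 +
    (y 0 * ξ 0 ^ 1 * ξ 1 ^ 0 + y 1 * ξ 0 ^ 1 * ξ 1 ^ 1 + y 2 * ξ 0 ^ 1 * ξ 1 ^ 2 +
      (w 0 * ξ 0 ^ 0 * ξ 1 ^ 1 + w 1 * ξ 0 ^ 0 * ξ 1 ^ 2 + w 2 * ξ 0 ^ 0 * ξ 1 ^ 3))) = _
  ring

lemma measurePreserving_cubicCoeff : MeasurePreserving cubicCoeff volume volume := by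
  have hmeas : Measurable cubicCoeff := by
    refine measurable_pi_iff.2 fun β => ?_
    obtain ⟨j, rfl⟩ := cubicIdxEquiv.surjective β
    simp only [cubicCoeff_cubicIdxEquiv]
    rcases j with j | j | j | j <;> simp only [Sum.elim_inl, Sum.elim_inr] <;> fun_prop
  refine ⟨hmeas, (Measure.pi_eq fun s hs => ?_).symm⟩
  rw [Measure.map_apply hmeas (MeasurableSet.univ_pi hs)]
  have hpre : cubicCoeff ⁻¹' univ.pi s = s (cubicIdxEquiv (Sum.inl 0)) ×ˢ
      (univ.pi fun i => s (cubicIdxEquiv (Sum.inr (Sum.inl i)))) ×ˢ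
      (univ.pi fun i => s (cubicIdxEquiv (Sum.inr (Sum.inr (Sum.inl i))))) ×ˢ
      (univ.pi fun i => s (cubicIdxEquiv (Sum.inr (Sum.inr (Sum.inr i))))) := by
    ext p
    simp only [mem_preimage, mem_univ_pi, mem_prod, ← cubicIdxEquiv.forall_congr_right,
      cubicCoeff_cubicIdxEquiv, Sum.forall, Sum.elim_inl, Sum.elim_inr, Fin.forall_fin_one]
  rw [hpre, ← cubicIdxEquiv.prod_comp]
  simp only [Measure.volume_eq_prod, Measure.prod_prod, volume_pi_pi, Fintype.prod_sum_type,
    Finset.univ_unique, Finset.prod_singleton]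
  rfl

lemma lintegral_eq_lintegral_cubicCoeff {G : (Idx 3 → ℝ) → ℝ≥0∞} (hG : Measurable G) :
    ∫⁻ x, G x = ∫⁻ a : ℝ, ∫⁻ z : Fin 2 → ℝ, ∫⁻ y : Fin 3 → ℝ, ∫⁻ w : Fin 3 → ℝ,
      G (cubicCoeff (a, z, y, w)) := by
  have hm : Measurable fun p => G (cubicCoeff p) := hG.comp measurePreserving_cubicCoeff.measurable
  rw [← measurePreserving_cubicCoeff.lintegral_comp hG, Measure.volume_eq_prod,
    lintegral_prod _ hm.aemeasurable]
  refine lintegral_congr fun a => ?_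
  have hm₁ : Measurable fun p => G (cubicCoeff (a, p)) := hm.comp measurable_prodMk_left
  rw [Measure.volume_eq_prod, lintegral_prod _ hm₁.aemeasurable]
  refine lintegral_congr fun z => ?_
  have hm₂ : Measurable fun p => G (cubicCoeff (a, z, p)) := hm₁.comp measurable_prodMk_left
  rw [Measure.volume_eq_prod, lintegral_prod _ hm₂.aemeasurable]

lemma continuous_Eone (k : ℕ) : Continuous (Eone k) := by
  refine continuous_parametric_integral_of_continuous
    (f := fun x ξ => Complex.exp (2 * Real.pi * Complex.I * (Pphase k x ξ))) ?_ isCompact_Icc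
  unfold Pphase Function.uncurry
  fun_prop

/-- The coefficients of `ξ₁, ξ₁ξ₂, ξ₁ξ₂²` in `a (ξ₁ - c - s ξ₂)³`. -/
def linearCenter (a c s : ℝ) : Fin 3 → ℝ := ![3 * a * c ^ 2, 6 * a * c * s, 3 * a * s ^ 2]

/-- The coefficients of `ξ₂, ξ₂², ξ₂³` in
`a (ξ₁ - c - s ξ₂)³ + (d₀ + d₁ ξ₂ + d₂ ξ₂²) (ξ₁ - c - s ξ₂)`. -/
def pureCenter (a c s : ℝ) (d : Fin 3 → ℝ) : Fin 3 → ℝ :=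
  ![-(3 * a * c ^ 2 * s + d 0 * s + d 1 * c), -(3 * a * c * s ^ 2 + d 1 * s + d 2 * c),
    -(a * s ^ 3 + d 2 * s)]

/-- The coefficients of the cubic
`a (ξ₁ - c - s ξ₂)³ + (d₀ + d₁ ξ₂ + d₂ ξ₂²) (ξ₁ - c - s ξ₂) + e₀ ξ₂ + e₁ ξ₂² + e₂ ξ₂³`,
without its constant term. -/
def stripCoeff (a c s : ℝ) (d e : Fin 3 → ℝ) : Idx 3 → ℝ :=
  cubicCoeff (a, ![-(3 * a * s), -(3 * a * c)], linearCenter a c s + d, pureCenter a c s d + e)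

lemma Pphase_stripCoeff (a c s : ℝ) (d e : Fin 3 → ℝ) (ξ : Fin 2 → ℝ) :
    Pphase 3 (stripCoeff a c s d e) ξ =
      a * (ξ 0 - (c + s * ξ 1)) ^ 3 +
        (d 0 + d 1 * ξ 1 + d 2 * ξ 1 ^ 2) * (ξ 0 - (c + s * ξ 1)) +
        (e 0 * ξ 1 + e 1 * ξ 1 ^ 2 + e 2 * ξ 1 ^ 3) + (a * c ^ 3 + d 0 * c) := by
  rw [stripCoeff, Pphase_cubicCoeff]
  simp [linearCenter, pureCenter]
  ring

lemma abs_add_three_mul_le {u v w p q r K : ℝ} (hu : |u| ≤ K) (hv : |v| ≤ K) (hw : |w| ≤ K)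
    (hp : |p| ≤ 1) (hq : |q| ≤ 1) (hr : |r| ≤ 1) : |u * p + v * q + w * r| ≤ 3 * K := by
  have h : ∀ {x y : ℝ}, |x| ≤ K → |y| ≤ 1 → |x * y| ≤ K := fun {x y} hx hy => by
    rw [abs_mul]
    exact (mul_le_of_le_one_right (abs_nonneg x) hy).trans hx
  have h1 := abs_add_three (u * p) (v * q) (w * r)
  linarith [h hu hp, h hv hq, h hw hr]

lemma norm_Eone_stripCoeff_ge {t c s : ℝ} {d e : Fin 3 → ℝ} (ht : 4 ≤ t)
    (hc : c ∈ Icc (1 / 4 : ℝ) (1 / 2)) (hs : s ∈ Icc (0 : ℝ) (1 / 4))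
    (hd : ∀ i, |d i| ≤ t / 3000) (he : ∀ i, |e i| ≤ 1 / 3000) :
    1 / (4 * t) ≤ ‖Eone 3 (stripCoeff (t ^ 3) c s d e)‖ := by
  have hpow : ∀ y ∈ Icc (0 : ℝ) 1, ∀ n : ℕ, |y ^ n| ≤ 1 := fun y hy n => by
    rw [abs_of_nonneg (pow_nonneg hy.1 n)]
    exact pow_le_one₀ hy.1 hy.2
  refine norm_integral_exp_ge_of_strip (m := fun y => c + s * y)
    (q := fun y => d 0 + d 1 * y + d 2 * y ^ 2) (r := fun y => e 0 * y + e 1 * y ^ 2 + e 2 * y ^ 3)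
    ht (by fun_prop) (by fun_prop) (by fun_prop) ?_ ?_ ?_ (Pphase_stripCoeff _ c s d e)
  · intro y hy
    constructor <;> nlinarith [hc.1, hc.2, hs.1, hs.2, hy.1, hy.2]
  · intro y hy
    have h := abs_add_three_mul_le (hd 0) (hd 1) (hd 2) (hpow y hy 0) (hpow y hy 1) (hpow y hy 2)
    rw [pow_zero, pow_one, mul_one] at h
    exact h.trans_eq (by ring)
  · intro y hy
    have h := abs_add_three_mul_le (he 0) (he 1) (he 2) (hpow y hy 1) (hpow y hy 2) (hpow y hy 3)
    rw [pow_one] at h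
    exact h.trans_eq (by ring)

lemma abs_stripCoeff_le {a c s : ℝ} {d e : Fin 3 → ℝ} (ha : 1 ≤ a)
    (hc : c ∈ Icc (1 / 4 : ℝ) (1 / 2)) (hs : s ∈ Icc (0 : ℝ) (1 / 4))
    (hd : ∀ i, |d i| ≤ a / 3000) (he : ∀ i, |e i| ≤ 1 / 3000) (β : Idx 3) :
    |stripCoeff a c s d e β| ≤ 2 * a := by
  obtain ⟨hc₁, hc₂⟩ := hc
  obtain ⟨hs₁, hs₂⟩ := hs
  have hd' := fun i => abs_le.1 (hd i)
  have he' := fun i => abs_le.1 (he i)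
  have hc0 : 0 ≤ c := by linarith
  have hdc : ∀ i, |d i * c| ≤ a / 3000 := fun i => by
    rw [abs_mul, abs_of_nonneg hc0]
    nlinarith [hd i, abs_nonneg (d i)]
  have hds : ∀ i, |d i * s| ≤ a / 3000 := fun i => by
    rw [abs_mul, abs_of_nonneg hs₁]
    nlinarith [hd i, abs_nonneg (d i)]
  have hdc' := fun i => abs_le.1 (hdc i)
  have hds' := fun i => abs_le.1 (hds i)
  have hmon : ∀ i j : ℕ, 0 ≤ a * (c ^ i * s ^ j) ∧
      a * (c ^ i * s ^ j) ≤ a * ((1 / 2) ^ i * (1 / 4) ^ j) := fun i j =>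
    ⟨by positivity, by gcongr⟩
  have h10 := hmon 1 0
  have h01 := hmon 0 1
  have h20 := hmon 2 0
  have h11 := hmon 1 1
  have h02 := hmon 0 2
  have h21 := hmon 2 1
  have h12 := hmon 1 2
  have h03 := hmon 0 3
  norm_num at h10 h01 h20 h11 h02 h21 h12 h03
  obtain ⟨j, rfl⟩ := cubicIdxEquiv.surjective β
  rw [stripCoeff, cubicCoeff_cubicIdxEquiv]
  rcases j with j | j | j | j <;> fin_cases j <;>
    simp [linearCenter, pureCenter, -abs_neg, -neg_add_rev, -Matrix.cons_add] <;> rw [abs_le] <;> constructor <;>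
    linarith [(hd' 0).1, (hd' 0).2, (hd' 1).1, (hd' 1).2, (hd' 2).1, (hd' 2).2, (he' 0).1,
      (he' 0).2, (he' 1).1, (he' 1).2, (he' 2).1, (he' 2).2, (hdc' 0).1, (hdc' 0).2, (hdc' 1).1,
      (hdc' 1).2, (hdc' 2).1, (hdc' 2).2, (hds' 0).1, (hds' 0).2, (hds' 1).1, (hds' 1).2,
      (hds' 2).1, (hds' 2).2]

lemma norm_toLp_le_of_abs_le {x : Idx 3 → ℝ} {K : ℝ} (hK : 0 ≤ K) (hx : ∀ β, |x β| ≤ K) :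
    ‖WithLp.toLp 2 x‖ ≤ 3 * K := by
  rw [EuclideanSpace.norm_eq]
  refine Real.sqrt_le_iff.2 ⟨by positivity, ?_⟩
  calc ∑ β, ‖x β‖ ^ 2 ≤ ∑ _β : Idx 3, K ^ 2 := by
        gcongr with β
        exact hx β
    _ = (3 * K) ^ 2 := by
        have hcard : Fintype.card (Idx 3) = 9 := by
          simp [← Fintype.card_congr cubicIdxEquiv]
        rw [Finset.sum_const, Finset.card_univ, hcard, nsmul_eq_mul]
        push_cast
        ring

lemma ofReal_mul_pow_card_le_lintegral {ι : Type*} [Fintype ι] {f : (ι → ℝ) → ℝ≥0∞}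
    {l u : ι → ℝ} {K h : ℝ} (hh : 0 ≤ h) (hlu : ∀ i, u i - l i = h)
    (hf : ∀ x ∈ Icc l u, ENNReal.ofReal K ≤ f x) :
    ENNReal.ofReal (K * h ^ Fintype.card ι) ≤ ∫⁻ x, f x := by
  calc ENNReal.ofReal (K * h ^ Fintype.card ι) = ∫⁻ _x in Icc l u, ENNReal.ofReal K := by
        rw [setLIntegral_const, Real.volume_Icc_pi, ENNReal.ofReal_mul' (by positivity),
          ENNReal.ofReal_pow hh]
        simp [hlu]
    _ ≤ ∫⁻ x in Icc l u, f x := setLIntegral_mono' measurableSet_Icc hf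
    _ ≤ ∫⁻ x, f x := setLIntegral_le_lintegral _ _

lemma abs_sub_le_of_mem_Icc_sub_add {ι : Type*} {x m : ι → ℝ} {r : ℝ}
    (hx : x ∈ Icc (fun i => m i - r) (fun i => m i + r)) (i : ι) : |(x - m) i| ≤ r := by
  have h1 := hx.1 i
  have h2 := hx.2 i
  simp only [Pi.sub_apply, abs_le]
  constructor <;> linarith

/-- Integrating a lower bound over the coefficients of strip phases with leading coefficient
`t ^ 3`. -/
lemma ofReal_le_lintegral_of_le_stripCoeff {G : (Idx 3 → ℝ) → ℝ≥0∞} {t K : ℝ} (ht : 0 < t)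
    (hG : ∀ c ∈ Icc (1 / 4 : ℝ) (1 / 2), ∀ s ∈ Icc (0 : ℝ) (1 / 4), ∀ d e : Fin 3 → ℝ,
      (∀ i, |d i| ≤ t / 3000) → (∀ i, |e i| ≤ 1 / 3000) →
        ENNReal.ofReal K ≤ G (stripCoeff (t ^ 3) c s d e)) :
    ENNReal.ofReal (K * (1 / 1500) ^ 3 * (t / 1500) ^ 3 * (3 * t ^ 3 / 4) ^ 2) ≤
      ∫⁻ z : Fin 2 → ℝ, ∫⁻ y : Fin 3 → ℝ, ∫⁻ w : Fin 3 → ℝ, G (cubicCoeff (t ^ 3, z, y, w)) := by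
  have ha : 0 < t ^ 3 := by positivity
  set a := t ^ 3
  refine ofReal_mul_pow_card_le_lintegral (ι := Fin 2) (l := ![-(3 * a / 4), -(3 * a / 2)])
    (u := ![0, -(3 * a / 4)]) (by positivity)
    (fun i => by fin_cases i <;> simp; ring) fun z hz => ?_
  have hz₁ := Fin.forall_fin_two.1 hz.1
  have hz₂ := Fin.forall_fin_two.1 hz.2
  simp only [Matrix.cons_val_zero, Matrix.cons_val_one] at hz₁ hz₂
  set s := -z 0 / (3 * a) with hs
  set c := -z 1 / (3 * a) with hc
  have hsm : s ∈ Icc (0 : ℝ) (1 / 4) := by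
    constructor
    · rw [hs, le_div_iff₀ (by positivity)]
      linarith
    · rw [hs, div_le_iff₀ (by positivity)]
      linarith
  have hcm : c ∈ Icc (1 / 4 : ℝ) (1 / 2) := by
    constructor
    · rw [hc, le_div_iff₀ (by positivity)]
      linarith
    · rw [hc, div_le_iff₀ (by positivity)]
      linarith
  have hzeq : z = ![-(3 * a * s), -(3 * a * c)] := by
    ext i
    fin_cases i <;> simp [hs, hc] <;> field_simp
  refine ofReal_mul_pow_card_le_lintegral (ι := Fin 3)
    (l := fun i => linearCenter a c s i - t / 3000) (u := fun i => linearCenter a c s i + t / 3000)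
    (by positivity) (fun i => by ring) fun y hy => ?_
  have hyd := abs_sub_le_of_mem_Icc_sub_add hy
  set d := y - linearCenter a c s with hd
  refine ofReal_mul_pow_card_le_lintegral (ι := Fin 3)
    (l := fun i => pureCenter a c s d i - 1 / 3000) (u := fun i => pureCenter a c s d i + 1 / 3000)
    (by positivity) (fun i => by ring) fun w hw => ?_
  have hwe := abs_sub_le_of_mem_Icc_sub_add hw
  have h := hG c hcm s hsm d _ hyd hwe
  rwa [stripCoeff, hd, add_sub_cancel, ← hd, add_sub_cancel, ← hzeq] at h

lemma lintegral_ofReal_mul_inv {C a b : ℝ} (hC : 0 ≤ C) (ha : 0 < a) (hab : a ≤ b) :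
    ∫⁻ x in Icc a b, ENNReal.ofReal (C * x⁻¹) = ENNReal.ofReal (C * log (b / a)) := by
  rw [← integral_inv_of_pos ha (ha.trans_le hab), ← intervalIntegral.integral_const_mul,
    intervalIntegral.integral_of_le hab, ← integral_Icc_eq_integral_Ioc,
    ofReal_integral_eq_lintegral_ofReal]
  · refine ContinuousOn.integrableOn_Icc (continuousOn_const.mul (continuousOn_inv₀.mono ?_))
    exact fun x hx => (ha.trans_le hx.1).ne'
  · refine (ae_restrict_iff' measurableSet_Icc).2 (Filter.Eventually.of_forall fun x hx => ?_)
    exact mul_nonneg hC (inv_nonneg.2 (ha.le.trans hx.1))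

lemma setIntegral_norm_Eone_pow_ge {R : ℝ} (hR : 384 ≤ R) :
    (1 / 4) ^ 12 * (1 / 1500) ^ 6 * (9 / 16) * log (R / 384) ≤
      ∫ x in Metric.closedBall (0 : EuclideanSpace ℝ (Idx 3)) R,
        ‖Eone 3 (fun β => x β)‖ ^ (12 : ℕ) := by
  set C : ℝ := (1 / 4) ^ 12 * (1 / 1500) ^ 6 * (9 / 16) with hC
  have hlog : 0 ≤ log (R / 384) := log_nonneg (by rw [le_div_iff₀] <;> linarith)
  set B := WithLp.toLp 2 ⁻¹' Metric.closedBall (0 : EuclideanSpace ℝ (Idx 3)) R with hB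
  set f : (Idx 3 → ℝ) → ℝ≥0∞ := fun x => ENNReal.ofReal (‖Eone 3 x‖ ^ 12) with hf
  have hBm : MeasurableSet B := (WithLp.measurable_toLp 2 _) Metric.isClosed_closedBall.measurableSet
  have hfm : Measurable f := by
    have := (continuous_Eone 3).measurable
    fun_prop
  have hcont : Continuous fun x : EuclideanSpace ℝ (Idx 3) => ‖Eone 3 (fun β => x β)‖ ^ 12 :=
    ((continuous_Eone 3).comp (PiLp.continuous_ofLp 2 _)).norm.pow 12
  have hlint : ENNReal.ofReal (∫ x in Metric.closedBall (0 : EuclideanSpace ℝ (Idx 3)) R,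
      ‖Eone 3 (fun β => x β)‖ ^ (12 : ℕ)) = ∫⁻ x, B.indicator f x := by
    rw [ofReal_integral_eq_lintegral_ofReal
      (hcont.continuousOn.integrableOn_compact (isCompact_closedBall _ _))
      (Filter.Eventually.of_forall fun x => by positivity), lintegral_indicator hBm]
    exact ((PiLp.volume_preserving_toLp (Idx 3)).setLIntegral_comp_preimage_emb
      (MeasurableEquiv.toLp 2 (Idx 3 → ℝ)).measurableEmbedding
      (fun x => ENNReal.ofReal (‖Eone 3 (fun β => x β)‖ ^ 12)) _).symm
  have hpt : ∀ a ∈ Icc (64 : ℝ) (R / 6), ENNReal.ofReal (C * a⁻¹) ≤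
      ∫⁻ z : Fin 2 → ℝ, ∫⁻ y : Fin 3 → ℝ, ∫⁻ w : Fin 3 → ℝ,
        B.indicator f (cubicCoeff (a, z, y, w)) := by
    intro a ha
    obtain ⟨t, ht, rfl⟩ : ∃ t : ℝ, 4 ≤ t ∧ t ^ 3 = a := by
      refine ⟨a ^ (1 / 3 : ℝ), ?_, ?_⟩
      · rw [show (4 : ℝ) = 64 ^ (1 / 3 : ℝ) by
          rw [show (64 : ℝ) = 4 ^ (3 : ℝ) by norm_num, ← rpow_mul (by norm_num)]
          norm_num]
        exact rpow_le_rpow (by norm_num) ha.1 (by norm_num)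
      · rw [← rpow_natCast, ← rpow_mul (by linarith [ha.1])]
        norm_num
    have ht0 : 0 < t := by linarith
    refine le_trans (le_of_eq ?_) (ofReal_le_lintegral_of_le_stripCoeff (K := (1 / (4 * t)) ^ 12)
      ht0 fun c hc s hs d e hd he => ?_)
    · congr 1
      rw [hC]
      field_simp
      norm_num
    · have ha1 : 1 ≤ t ^ 3 := by linarith [ha.1]
      have hd' : ∀ i, |d i| ≤ t ^ 3 / 3000 := fun i => (hd i).trans (by
        have : t ≤ t ^ 3 := le_self_pow₀ (by linarith) (by norm_num)
        linarith)
      have hmem : stripCoeff (t ^ 3) c s d e ∈ B := by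
        rw [hB, mem_preimage, mem_closedBall_zero_iff]
        refine (norm_toLp_le_of_abs_le (by positivity)
          (abs_stripCoeff_le ha1 hc hs hd' he)).trans ?_
        linarith [ha.2]
      rw [indicator_of_mem hmem]
      exact ENNReal.ofReal_le_ofReal
        (pow_le_pow_left₀ (by positivity) (norm_Eone_stripCoeff_ge ht hc hs hd he) 12)
  refine (ENNReal.ofReal_le_ofReal_iff (integral_nonneg fun x => by positivity)).1 ?_
  rw [hlint, lintegral_eq_lintegral_cubicCoeff (hfm.indicator hBm)]
  calc ENNReal.ofReal (C * log (R / 384)) = ∫⁻ a in Icc (64 : ℝ) (R / 6),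
        ENNReal.ofReal (C * a⁻¹) := by
        rw [lintegral_ofReal_mul_inv (by positivity) (by norm_num) (by linarith)]
        congr 3
        ring
    _ ≤ _ := (setLIntegral_mono' measurableSet_Icc hpt).trans (setLIntegral_le_lintegral _ _)

/-- **Remark 1.5** (case `k = 3`, `N = 9`): `E_31` just misses `L^{12}(ℝ⁹)`:
there are `c > 0` and `R₀ ≥ 2` with `∫_{B_R} |E_31(x)|^{12} dx ≥ c log R` for all
`R ≥ R₀`, where `B_R` is the closed Euclidean ball of radius `R` about the origin. -/
theorem E31_log_lower_bound :
    ∃ c : ℝ, 0 < c ∧ ∃ R₀ : ℝ, 2 ≤ R₀ ∧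
      ∀ R : ℝ, R₀ ≤ R →
        c * Real.log R ≤
          ∫ x in Metric.closedBall (0 : EuclideanSpace ℝ (Idx 3)) R,
            ‖Eone 3 (fun β => x β)‖ ^ (12 : ℕ) := by
  refine ⟨(1 / 4) ^ 12 * (1 / 1500) ^ 6 * (9 / 16) / 2, by norm_num, 384 ^ 2, by norm_num,
    fun R hR => le_trans ?_ (setIntegral_norm_Eone_pow_ge (by linarith))⟩
  have h1 : 2 * log 384 ≤ log R := by
    have h2 := log_le_log (by norm_num) hR
    rwa [log_pow, Nat.cast_ofNat] at h2
  rw [log_div (by linarith) (by norm_num)]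
  nlinarith
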